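/- For all integers r ≥ 2, e ≥ 3, a with r < a ≤ 2r, and b with a ≤ b ≤ min{ C(r+1,2) + C(a−r+1,2), C(r+e−3, e−2) }, there exists a level standard graded artinian algebra of type 2, codimension r and socle degree e over k whose h-vector (1, r, …, h_{e-2}, h_{e-1}, 2) satisfies h_{e-2} = b and h_{e-1} = a. -/

import Mathlib

/-!
The algebra is built by Macaulay's inverse systems from two sums of `e`-th powers of linear forms.
Write `s = a - r`, so `1 ≤ s ≤ r`, and split `b = nP + nQ` with `r ≤ nP ≤ C(r+1,2)` and
`s ≤ nQ ≤ C(s+1,2)`. Take `nP` general points `p` of `k^r` and `nQ` general points `q` of a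
coordinate subspace `k^s`, and let `I` be the largest ideal killed by the functionals
`f ↦ ∑ f_e(pᵢ)` and `f ↦ ∑ f_e(qᵢ)`. The quotient is level, since all generators of the inverse
system have the same degree `e` (`isLevelQuot_pointIdeal`).

General means (`exists_general_points`): each family spans its space and imposes independent
conditions on quadrics, and both together impose independent conditions on forms of degree `e-2`.
Points of `p` are added one at a time off the zero locus of finitely many nonzero forms through the
previous points; such forms exist by counting monomials, as `b ≤ C(r+e-3, e-2)`.

Let `f` be a form of degree `e-2`. It lies in `I` iff `∑ f(pᵢ) g(pᵢ) = 0 = ∑ f(qᵢ) g(qᵢ)` for all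
quadrics `g`, and since quadrics take arbitrary values on each family, this says that `f` vanishes
at all points. The values of `f` being arbitrary, `h_{e-2} = nP + nQ = b`
(`hilb_pointIdeal_sub_two`). For a form `f` of degree `e-1` the condition becomes
`∑ f(pᵢ) pᵢ = 0 = ∑ f(qᵢ) qᵢ`, so `h_{e-1} = r + s = a` (`hilb_pointIdeal_sub_one`).
-/

open MvPolynomial

/-- The degree-`d` graded piece of the quotient `k[x_1,…,x_r]/I`, realized as the image of
the space of homogeneous polynomials of degree `d` in the quotient. -/
noncomputable def quotPiece (k : Type) [Field k] (r : ℕ)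
    (I : Ideal (MvPolynomial (Fin r) k)) (d : ℕ) :
    Submodule k (MvPolynomial (Fin r) k ⧸ I) :=
  (homogeneousSubmodule (Fin r) k d).map (Ideal.Quotient.mkₐ k I).toLinearMap

/-- The Hilbert function of the quotient `k[x_1,…,x_r]/I`. -/
noncomputable def hilb (k : Type) [Field k] (r : ℕ)
    (I : Ideal (MvPolynomial (Fin r) k)) (d : ℕ) : ℕ :=
  Module.finrank k (quotPiece k r I d)

/-- `A = k[x_1,…,x_r]/I` is a level standard graded artinian algebra of socle degree `e` and
type `t`: the ideal `I` is homogeneous, the Hilbert function of `A` vanishes in degrees `> e`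
and equals `t` in degree `e`, and the socle of `A` (the annihilator of the irrelevant maximal
ideal) coincides with the degree-`e` graded piece `A_e`. -/
def IsLevelQuot (k : Type) [Field k] (r e t : ℕ)
    (I : Ideal (MvPolynomial (Fin r) k)) : Prop :=
  (∀ f ∈ I, ∀ d, homogeneousComponent d f ∈ I) ∧
  (∀ d, e < d → hilb k r I d = 0) ∧
  hilb k r I e = t ∧
  {a : MvPolynomial (Fin r) k ⧸ I | ∀ i, a * Ideal.Quotient.mk I (X i) = 0} =
    (quotPiece k r I e : Set (MvPolynomial (Fin r) k ⧸ I))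

/-! ### Points imposing independent conditions on forms -/

section Points

variable {k : Type} [Field k]

lemma homogeneousComponent_mul_left {m d : ℕ} (e : ℕ) {f : MvPolynomial (Fin m) k}
    (hf : f.IsHomogeneous d) (g : MvPolynomial (Fin m) k) :
    homogeneousComponent e (f * g) =
      if d ≤ e then f * homogeneousComponent (e - d) g else 0 := by
  induction g using MvPolynomial.induction_on' with
  | monomial u c =>
    have h1 : (monomial u c : MvPolynomial (Fin m) k).IsHomogeneous u.degree :=
      isHomogeneous_monomial c rfl
    rw [homogeneousComponent_of_mem (hf.mul h1), homogeneousComponent_of_mem h1]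
    split_ifs <;> first | rfl | omega | simp
  | add g g' hg hg' =>
    rw [mul_add, map_add, hg, hg']
    split_ifs <;> simp [mul_add]

/-- Evaluation at the points of the family `p` is onto on forms of degree `d`; that is, these
points impose independent conditions on forms of degree `d`. -/
def Interp {ι : Type} {m : ℕ} (d : ℕ) (p : ι → Fin m → k) : Prop :=
  ∀ c : ι → k, ∃ f : MvPolynomial (Fin m) k, f.IsHomogeneous d ∧ ∀ i, eval (p i) f = c i

lemma Interp.left {ι κ : Type} {m d : ℕ} {p : ι → Fin m → k} {q : κ → Fin m → k}
    (h : Interp d (Sum.elim p q)) : Interp d p := by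
  intro c
  obtain ⟨f, hf, hf'⟩ := h (Sum.elim c 0)
  exact ⟨f, hf, fun i => hf' (Sum.inl i)⟩

lemma eval_eq_zero_of_point_zero {m d : ℕ} (hd : 1 ≤ d) {f : MvPolynomial (Fin m) k}
    (hf : f.IsHomogeneous d) {x : Fin m → k} (hx : ∀ l, x l = 0) : eval x f = 0 := by
  obtain rfl : x = 0 := funext hx
  rw [show eval (0 : Fin m → k) f = coeff 0 f by
    rw [← constantCoeff_eq, ← aeval_eq_eval, aeval_zero]; rfl]
  exact hf.coeff_eq_zero (by simp; omega)

/-- Independence of conditions persists in higher degree: a form of degree `d` separating one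
point from the others is multiplied by a coordinate that does not vanish at that point. -/
lemma Interp.succ {ι : Type} [Finite ι] {m d : ℕ} (hd : 1 ≤ d) {p : ι → Fin m → k}
    (h : Interp d p) : Interp (d + 1) p := by
  classical
  cases nonempty_fintype ι
  choose F hF hF' using fun i : ι => h (Pi.single i 1)
  have hne : ∀ i, ∃ l, p i l ≠ 0 := by
    intro i
    by_contra! hx
    have := eval_eq_zero_of_point_zero hd (hF i) hx
    rw [hF' i i] at this
    simp at this
  choose l hl using hne
  intro c
  refine ⟨∑ i, C (c i / p i (l i)) * (F i * X (l i)), ?_, fun j => ?_⟩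
  · exact IsHomogeneous.sum _ _ _ fun i _ => ((hF i).mul (isHomogeneous_X k (l i))).C_mul _
  · rw [map_sum, Finset.sum_eq_single j]
    · simp [hF', hl]
    · intro i _ hij
      simp [hF', hij.symm]
    · simp

/-- There are `C(m+d-1, d)` monomials of degree `d`, so fewer points than that lie on a nonzero
form of degree `d`. -/
lemma exists_vanishing_form {ι : Type} [Fintype ι] {m d : ℕ} (p : ι → Fin m → k)
    (hc : Fintype.card ι < (m + d - 1).choose d) :
    ∃ f : MvPolynomial (Fin m) k, f ≠ 0 ∧ f.IsHomogeneous d ∧ ∀ i, eval (p i) f = 0 := by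
  classical
  let u : Sym (Fin m) d → (Fin m →₀ ℕ) := fun s => Multiset.toFinsupp (s : Multiset (Fin m))
  have hu : Function.Injective u := fun s t h =>
    Subtype.ext (Multiset.toFinsupp.injective h)
  have hdeg : ∀ s, (u s).degree = d := by
    intro s
    have h1 : Multiset.card (Finsupp.toMultiset (u s)) = (u s).degree := by
      rw [Finsupp.card_toMultiset]; rfl
    rw [← h1]
    simp [u]
  let T : (Sym (Fin m) d → k) →ₗ[k] MvPolynomial (Fin m) k :=
    ∑ s, (monomial (u s)).comp (LinearMap.proj s)
  have hT : ∀ c, T c = ∑ s, monomial (u s) (c s) := by intro c; simp [T]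
  let E : MvPolynomial (Fin m) k →ₗ[k] (ι → k) :=
    LinearMap.pi fun i => (aeval (p i)).toLinearMap
  have hker : LinearMap.ker (E ∘ₗ T) ≠ ⊥ := by
    apply LinearMap.ker_ne_bot_of_finrank_lt
    rw [Module.finrank_fintype_fun_eq_card, Module.finrank_fintype_fun_eq_card,
      Sym.card_sym_eq_choose, Fintype.card_fin]
    exact hc
  obtain ⟨c, hc1, hc0⟩ := Submodule.exists_mem_ne_zero_of_ne_bot hker
  refine ⟨T c, ?_, ?_, ?_⟩
  · intro h0
    apply hc0
    funext s
    have := congrArg (coeff (u s)) h0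
    rw [hT, coeff_sum, Finset.sum_eq_single s] at this
    · simpa using this
    · intro t _ hts
      rw [coeff_monomial, if_neg fun h => hts (hu h)]
    · simp
  · rw [hT]
    exact IsHomogeneous.sum _ _ _ fun s _ => isHomogeneous_monomial _ (hdeg s)
  · intro i
    have := congrFun (LinearMap.mem_ker.1 hc1) i
    simpa [E, aeval_eq_eval] using this

/-- Adding to a family that imposes independent conditions a point off a form through the family
keeps the conditions independent. -/
lemma Interp.cons {κ : Type} {n m d : ℕ} {p : Fin n → Fin m → k} {q : κ → Fin m → k}
    (h : Interp d (Sum.elim p q)) {f : MvPolynomial (Fin m) k} (hf : f.IsHomogeneous d)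
    (hfp : ∀ i, eval (Sum.elim p q i) f = 0) {x : Fin m → k} (hx : eval x f ≠ 0) :
    Interp d (Sum.elim (Fin.cons x p : Fin (n + 1) → Fin m → k) q) := by
  intro c
  obtain ⟨g, hg, hg'⟩ := h (Sum.elim (fun i => c (Sum.inl i.succ)) fun j => c (Sum.inr j))
  refine ⟨g + C ((c (Sum.inl 0) - eval x g) / eval x f) * f, hg.add (hf.C_mul _), ?_⟩
  rintro (i | j)
  · induction i using Fin.cases with
    | zero => simp [hx]
    | succ i =>
      have h1 := hg' (Sum.inl i)
      have h2 := hfp (Sum.inl i)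
      simp only [Sum.elim_inl] at h1 h2
      simp [h1, h2]
  · have h1 := hg' (Sum.inr j)
    have h2 := hfp (Sum.inr j)
    simp only [Sum.elim_inr] at h1 h2
    simp [h1, h2]

/-- The (coefficient vectors of) linear forms vanishing at all points of the family `p`. -/
def linVanish {n m : ℕ} (p : Fin n → Fin m → k) : Submodule k (Fin m → k) where
  carrier := {l | ∀ i, l ⬝ᵥ p i = 0}
  add_mem' ha hb i := by rw [add_dotProduct, ha i, hb i, add_zero]
  zero_mem' i := zero_dotProduct _
  smul_mem' c l hl i := by rw [smul_dotProduct, hl i, smul_zero]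

/-- General points: `n` points of `k^m` can be chosen to span as much of `k^m` as `n` allows, to
impose independent conditions on quadrics, and to impose, jointly with a given family `q`,
independent conditions on forms of degree `d`, provided that there is room for them. -/
theorem exists_general_points [Infinite k] {κ : Type} [Fintype κ] {m d : ℕ} (q : κ → Fin m → k)
    (hq : Interp d q) (n : ℕ) (hn2 : n ≤ (m + 1).choose 2)
    (hnd : n + Fintype.card κ ≤ (m + d - 1).choose d) :
    ∃ p : Fin n → Fin m → k, Interp 2 p ∧ Interp d (Sum.elim p q) ∧
      Module.finrank k (linVanish p) ≤ m - n := by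
  induction n with
  | zero =>
    refine ⟨Fin.elim0, fun c => ⟨0, isHomogeneous_zero _ _ _, fun i => i.elim0⟩, fun c => ?_, ?_⟩
    · obtain ⟨f, hf, hf'⟩ := hq fun j => c (Sum.inr j)
      exact ⟨f, hf, by rintro (i | j); exacts [i.elim0, hf' j]⟩
    · simpa using Submodule.finrank_le (linVanish (k := k) (m := m) Fin.elim0)
  | succ n ih =>
    obtain ⟨p, h2, hd, h1⟩ := ih (by omega) (by omega)
    obtain ⟨f2, hf20, hf2, hf2p⟩ := exists_vanishing_form (d := 2) p (by simp; omega)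
    obtain ⟨fd, hfd0, hfd, hfdp⟩ := exists_vanishing_form (d := d) (Sum.elim p q) (by simp; omega)
    -- A nonzero linear form through the points, if there is any left.
    obtain ⟨l, hl0, hl⟩ : ∃ f1 : MvPolynomial (Fin m) k, f1 ≠ 0 ∧ ∀ x, eval x f1 ≠ 0 →
        Module.finrank k (linVanish (Fin.cons x p : Fin (n + 1) → Fin m → k)) ≤ m - (n + 1) := by
      have hle : ∀ x, linVanish (Fin.cons x p : Fin (n + 1) → Fin m → k) ≤ linVanish p :=
        fun x l hl i => by simpa using hl i.succ
      by_cases hb : linVanish p = ⊥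
      · refine ⟨1, one_ne_zero, fun x _ => ?_⟩
        have := hle x
        rw [hb, le_bot_iff] at this
        rw [this]
        simp
      · obtain ⟨l, hl, hl0⟩ := Submodule.exists_mem_ne_zero_of_ne_bot hb
        have hev : ∀ x, eval x (∑ i, C (l i) * X i) = l ⬝ᵥ x := fun x => by
          simp [dotProduct]
        refine ⟨∑ i, C (l i) * X i, fun h0 => hl0 (funext fun i => ?_), fun x hx => ?_⟩
        · have := hev (Pi.single i 1)
          rw [h0] at this
          simpa using this.symm
        · rw [hev] at hx
          have hlt : linVanish (Fin.cons x p : Fin (n + 1) → Fin m → k) < linVanish p :=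
            lt_of_le_of_ne (hle x) fun h => hx (by
              rw [← h] at hl
              simpa using hl 0)
          have := Submodule.finrank_lt_finrank_of_lt hlt
          omega
    obtain ⟨x, hx⟩ : ∃ x, eval x (l * f2 * fd) ≠ 0 := by
      by_contra! h
      exact mul_ne_zero (mul_ne_zero hl0 hf20) hfd0 (MvPolynomial.funext fun x => by simp [h x])
    rw [map_mul, map_mul] at hx
    refine ⟨Fin.cons x p, ?_, hd.cons hfd hfdp (right_ne_zero_of_mul hx),
      hl x (left_ne_zero_of_mul (left_ne_zero_of_mul hx))⟩
    have h2' : Interp 2 (Sum.elim p (Empty.elim : Empty → Fin m → k)) := by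
      intro c
      obtain ⟨f, hf, hf'⟩ := h2 fun i => c (Sum.inl i)
      exact ⟨f, hf, by rintro (i | j); exacts [hf' i, j.elim]⟩
    exact (h2'.cons hf2 (by rintro (i | j); exacts [hf2p i, j.elim])
      (right_ne_zero_of_mul (left_ne_zero_of_mul hx))).left

/-- Points that lie on no hyperplane span. -/
lemma exists_sum_smul_eq {n m : ℕ} {p : Fin n → Fin m → k} (h : linVanish p = ⊥)
    (v : Fin m → k) : ∃ c : Fin n → k, ∑ i, c i • p i = v := by
  suffices hs : Submodule.span k (Set.range p) = ⊤ from
    Submodule.mem_span_range_iff_exists_fun k |>.1 (hs ▸ Submodule.mem_top)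
  by_contra hs
  obtain ⟨φ, hφ0, hφ⟩ := Submodule.exists_le_ker_of_lt_top _ (lt_top_iff_ne_top.2 hs)
  have hev : ∀ x, φ x = (fun i => φ (Pi.single i 1)) ⬝ᵥ x := fun x => by
    conv_lhs => rw [pi_eq_sum_univ' x]
    simp [dotProduct, mul_comm]
  have hmem : (fun i => φ (Pi.single i 1)) ∈ linVanish p := fun i => by
    rw [← hev]
    exact hφ (Submodule.subset_span ⟨i, rfl⟩)
  rw [h, Submodule.mem_bot] at hmem
  exact hφ0 (LinearMap.ext fun x => by rw [hev, hmem]; simp)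

/-- The inclusion of `k^s` in `k^r` as a coordinate subspace. -/
def extPoint {s : ℕ} (r : ℕ) (x : Fin s → k) : Fin r → k :=
  fun i => if h : (i : ℕ) < s then x ⟨i, h⟩ else 0

lemma Interp.extPoint {ι : Type} {s r d : ℕ} (hsr : s ≤ r) {q : ι → Fin s → k}
    (h : Interp d q) : Interp d (fun i => extPoint r (q i)) := by
  intro c
  obtain ⟨f, hf, hf'⟩ := h c
  refine ⟨rename (Fin.castLE hsr) f, hf.rename_isHomogeneous, fun i => ?_⟩
  rw [eval_rename, ← hf']
  congr 2
  funext j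
  simp [_root_.extPoint]

end Points

/-! ### Algebras apolar to sums of powers of linear forms -/

section Level

variable {k : Type} [Field k] {r : ℕ}

/-- The functional `f ↦ ∑ᵢ f_e(pᵢ)`, where `f_e` is the degree `e` part of `f`. It corresponds
under apolarity to the sum of the `e`-th powers of the linear forms with coefficients `pᵢ`. -/
noncomputable def pointSum {n : ℕ} (e : ℕ) (p : Fin n → Fin r → k) :
    MvPolynomial (Fin r) k →ₗ[k] k :=
  ∑ i, (aeval (p i)).toLinearMap ∘ₗ homogeneousComponent e

lemma pointSum_apply {n : ℕ} (e : ℕ) (p : Fin n → Fin r → k) (f : MvPolynomial (Fin r) k) :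
    pointSum e p f = ∑ i, eval (p i) (homogeneousComponent e f) := by
  simp [pointSum, aeval_eq_eval]

lemma pointSum_mul {n d e : ℕ} (p : Fin n → Fin r → k) {f : MvPolynomial (Fin r) k}
    (hf : f.IsHomogeneous d) (hd : d ≤ e) (g : MvPolynomial (Fin r) k) :
    pointSum e p (f * g) =
      ∑ i, eval (p i) f * eval (p i) (homogeneousComponent (e - d) g) := by
  simp [pointSum_apply, homogeneousComponent_mul_left e hf, hd]

lemma pointSum_mul_of_lt {n d e : ℕ} (p : Fin n → Fin r → k) {f : MvPolynomial (Fin r) k}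
    (hf : f.IsHomogeneous d) (hd : e < d) (g : MvPolynomial (Fin r) k) :
    pointSum e p (f * g) = 0 := by
  simp [pointSum_apply, homogeneousComponent_mul_left e hf, hd.not_ge]

/-- The ideal apolar to the functionals `φ` and `ψ`: the largest ideal on which both vanish. -/
def apolarIdeal (φ ψ : MvPolynomial (Fin r) k →ₗ[k] k) : Ideal (MvPolynomial (Fin r) k) where
  carrier := {f | ∀ g, φ (f * g) = 0 ∧ ψ (f * g) = 0}
  add_mem' ha hb g := by simp [add_mul, ha g, hb g]
  zero_mem' g := by simp
  smul_mem' c f hf g := by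
    have := hf (c * g)
    rwa [mul_left_comm, ← mul_assoc] at this

lemma mem_apolarIdeal {φ ψ : MvPolynomial (Fin r) k →ₗ[k] k} {f : MvPolynomial (Fin r) k} :
    f ∈ apolarIdeal φ ψ ↔ ∀ g, φ (f * g) = 0 ∧ ψ (f * g) = 0 := Iff.rfl

variable {nP nQ e : ℕ} (p : Fin nP → Fin r → k) (q : Fin nQ → Fin r → k)

/-- The apolar ideal of the two power sums supported on `p` and on `q`. -/
noncomputable def pointIdeal (e : ℕ) (p : Fin nP → Fin r → k) (q : Fin nQ → Fin r → k) :
    Ideal (MvPolynomial (Fin r) k) := apolarIdeal (pointSum e p) (pointSum e q)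

/-- Membership of a form in the ideal is tested on forms of the complementary degree. -/
lemma mem_pointIdeal_iff {d d' : ℕ} (hdd : d + d' = e) {f : MvPolynomial (Fin r) k}
    (hf : f.IsHomogeneous d) :
    f ∈ pointIdeal e p q ↔ ∀ g : MvPolynomial (Fin r) k, g.IsHomogeneous d' →
      ∑ i, eval (p i) f * eval (p i) g = 0 ∧ ∑ i, eval (q i) f * eval (q i) g = 0 := by
  obtain rfl : d' = e - d := by omega
  have hd : d ≤ e := by omega
  rw [pointIdeal, mem_apolarIdeal]
  constructor
  · intro h g hg
    have := h g
    rwa [pointSum_mul p hf hd, pointSum_mul q hf hd, homogeneousComponent_eq_self hg] at this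
  · intro h g
    rw [pointSum_mul p hf hd, pointSum_mul q hf hd]
    exact h _ (homogeneousComponent_isHomogeneous _ _)

lemma mem_pointIdeal_of_lt {d : ℕ} (hd : e < d) {f : MvPolynomial (Fin r) k}
    (hf : f.IsHomogeneous d) : f ∈ pointIdeal e p q := fun g =>
  ⟨pointSum_mul_of_lt p hf hd g, pointSum_mul_of_lt q hf hd g⟩

lemma pointIdeal_homogeneous {f : MvPolynomial (Fin r) k} (hf : f ∈ pointIdeal e p q) (d : ℕ) :
    homogeneousComponent d f ∈ pointIdeal e p q := by
  have hd' := homogeneousComponent_isHomogeneous d f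
  rcases lt_or_ge e d with hd | hd
  · exact mem_pointIdeal_of_lt p q hd hd'
  rw [mem_pointIdeal_iff p q (d' := e - d) (by omega) hd']
  intro g hg
  have := hf g
  rw [mul_comm, pointSum_mul p hg (by omega), pointSum_mul q hg (by omega),
    show e - (e - d) = d by omega] at this
  simpa only [mul_comm] using this

/-- An element killed by all variables agrees with its degree `e` part modulo the ideal; this is
what makes an algebra apolar to forms of a single degree `e` level. -/
lemma sub_component_mem_pointIdeal {f : MvPolynomial (Fin r) k}
    (hf : ∀ i, f * X i ∈ pointIdeal e p q) :
    f - homogeneousComponent e f ∈ pointIdeal e p q := by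
  have hX : ∀ i, (f - homogeneousComponent e f) * X i ∈ pointIdeal e p q := by
    intro i
    rw [sub_mul]
    exact sub_mem (hf i) (mem_pointIdeal_of_lt p q (Nat.lt_succ_self e)
      ((homogeneousComponent_isHomogeneous e f).mul (isHomogeneous_X k i)))
  have h0 : homogeneousComponent e (f - homogeneousComponent e f) = 0 := by
    rw [map_sub, homogeneousComponent_eq_self (homogeneousComponent_isHomogeneous e f), sub_self]
  intro g
  induction g using MvPolynomial.induction_on with
  | C c =>
    rw [mul_comm, pointSum_apply, pointSum_apply, homogeneousComponent_C_mul, h0]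
    simp
  | add g g' hg hg' => simp [mul_add, hg, hg']
  | mul_X g i _ =>
    have := hX i g
    rwa [mul_assoc, mul_comm (X i) g] at this

/-- The Hilbert function of `R/I` in degree `d` is computed by any linear map `T` that sends `R_d`
onto `V` with kernel `I ∩ R_d`: the degree `d` part of `R/I` is then isomorphic to `V`. -/
lemma hilb_eq_finrank {V : Type} [AddCommGroup V] [Module k V] [FiniteDimensional k V]
    (I : Ideal (MvPolynomial (Fin r) k)) (d : ℕ) (T : MvPolynomial (Fin r) k →ₗ[k] V)
    (hker : ∀ f : MvPolynomial (Fin r) k, f.IsHomogeneous d → (T f = 0 ↔ f ∈ I))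
    (hsurj : ∀ v, ∃ f : MvPolynomial (Fin r) k, f.IsHomogeneous d ∧ T f = v) :
    hilb k r I d = Module.finrank k V := by
  let W := homogeneousSubmodule (Fin r) k d
  let M := (Ideal.Quotient.mkₐ k I).toLinearMap ∘ₗ W.subtype
  let S := T ∘ₗ W.subtype
  have hM : LinearMap.range M = quotPiece k r I d := by
    rw [LinearMap.range_comp, Submodule.range_subtype]
    rfl
  have hk : LinearMap.ker M = LinearMap.ker S := by
    ext f
    have := hker f.1 f.2
    rw [LinearMap.mem_ker, LinearMap.mem_ker]
    change Ideal.Quotient.mk I f.1 = 0 ↔ T f.1 = 0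
    rw [this, Ideal.Quotient.eq_zero_iff_mem]
  have hS : Function.Surjective S := fun v => by
    obtain ⟨f, hf, hfv⟩ := hsurj v
    exact ⟨⟨f, hf⟩, hfv⟩
  rw [hilb, ← hM]
  exact ((M.quotKerEquivRange.symm.trans (Submodule.quotEquivOfEq _ _ hk)).trans
    (S.quotKerEquivOfSurjective hS)).finrank_eq

variable {p q}

/-- Weights on the points of an independent family are determined by the weighted sums of the
values of forms. -/
lemma eval_eq_zero_of_orthogonal {ι : Type} [Fintype ι] {d : ℕ} {p : ι → Fin r → k}
    (h : Interp d p) {c : ι → k}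
    (hc : ∀ g : MvPolynomial (Fin r) k, g.IsHomogeneous d → ∑ i, c i * eval (p i) g = 0) (i : ι) :
    c i = 0 := by
  classical
  obtain ⟨g, hg, hg'⟩ := h (Pi.single i 1)
  simpa [hg', Pi.single_apply] using hc g hg

/-- The algebra apolar to two power sums of degree `e` on nonempty families of points that impose
independent conditions on forms of degree `e` is level of type 2. -/
lemma isLevelQuot_pointIdeal (hP : 0 < nP) (hQ : 0 < nQ) (he : Interp e (Sum.elim p q)) :
    IsLevelQuot k r e 2 (pointIdeal e p q) := by
  refine ⟨fun f hf d => pointIdeal_homogeneous p q hf d, fun d hd => ?_, ?_, ?_⟩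
  · rw [hilb_eq_finrank (V := Fin 0 → k) _ d 0]
    · simp
    · intro f hf
      simpa using mem_pointIdeal_of_lt p q hd hf
    · exact fun v => ⟨0, isHomogeneous_zero _ _ _, Subsingleton.elim _ _⟩
  · rw [hilb_eq_finrank (V := k × k) _ e ((pointSum e p).prod (pointSum e q))]
    · simp
    · intro f hf
      rw [mem_pointIdeal_iff p q (d' := 0) (by omega) hf]
      have hT : (pointSum e p).prod (pointSum e q) f = 0 ↔
          pointSum e p f = 0 ∧ pointSum e q f = 0 := Prod.mk_eq_zero
      rw [hT, pointSum_apply, pointSum_apply, homogeneousComponent_eq_self hf]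
      constructor
      · rintro ⟨h1, h2⟩ g hg
        rw [← mem_homogeneousSubmodule, homogeneousSubmodule_zero, Submodule.mem_one] at hg
        obtain ⟨c, rfl⟩ := hg
        simp [algebraMap_eq, ← Finset.sum_mul, h1, h2]
      · intro h
        simpa using h 1 (isHomogeneous_one _ _)
    · rintro ⟨u, v⟩
      obtain ⟨f, hf, hf'⟩ := he (Sum.elim (Pi.single ⟨0, hP⟩ u) (Pi.single ⟨0, hQ⟩ v))
      have h1 : ∀ i, eval (p i) f = _ := fun i => hf' (Sum.inl i)
      have h2 : ∀ i, eval (q i) f = _ := fun i => hf' (Sum.inr i)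
      refine ⟨f, hf, ?_⟩
      simp [pointSum_apply, homogeneousComponent_eq_self hf, h1, h2]
  · ext a
    obtain ⟨f, rfl⟩ := Ideal.Quotient.mk_surjective a
    simp only [Set.mem_ofPred_eq, SetLike.mem_coe, ← map_mul, Ideal.Quotient.eq_zero_iff_mem]
    constructor
    · intro h
      refine ⟨homogeneousComponent e f, homogeneousComponent_isHomogeneous e f, ?_⟩
      exact (Ideal.Quotient.eq.2 (sub_component_mem_pointIdeal p q h)).symm
    · rintro ⟨g, hg, hgf⟩ i
      have h1 : g - f ∈ pointIdeal e p q := Ideal.Quotient.eq.1 hgf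
      have h2 : g * X i ∈ pointIdeal e p q := mem_pointIdeal_of_lt p q (Nat.lt_succ_self e)
        (IsHomogeneous.mul hg (isHomogeneous_X k i))
      have h3 := sub_mem h2 (Ideal.mul_mem_right (X i) _ h1)
      rwa [← sub_mul, sub_sub_cancel] at h3

/-- A linear form in the ideal vanishes at all points of `p`, hence is zero when these span. -/
lemma hilb_one_pointIdeal (h : Interp e p) (hp : linVanish p = ⊥) :
    hilb k r (pointIdeal (e + 1) p q) 1 = r := by
  have hlin : ∀ f : MvPolynomial (Fin r) k, f.IsHomogeneous 1 →
      f = ∑ i, C (coeff (Finsupp.single i 1) f) * X i := by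
    intro f hf
    rw [← mem_homogeneousSubmodule, homogeneousSubmodule_one_eq_span_X,
      Submodule.mem_span_range_iff_exists_fun] at hf
    obtain ⟨c, rfl⟩ := hf
    refine Finset.sum_congr rfl fun i _ => ?_
    rw [coeff_sum, Finset.sum_eq_single i]
    · simp [smul_eq_C_mul]
    · intro j _ hj
      simp [coeff_X, Finsupp.single_left_inj, hj]
    · simp
  rw [hilb_eq_finrank (V := Fin r → k) _ 1
    (LinearMap.pi fun i => lcoeff k (Finsupp.single i 1))]
  · simp
  · intro f hf
    constructor
    · intro h0
      have : ∀ i, coeff (Finsupp.single i 1) f = 0 := fun i => congrFun h0 i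
      rw [hlin f hf]
      simp [this]
    · intro hI
      rw [mem_pointIdeal_iff p q (d' := e) (by omega) hf] at hI
      have h0 : ∀ i, eval (p i) f = 0 :=
        eval_eq_zero_of_orthogonal h fun g hg => (hI g hg).1
      have hmem : (fun i => coeff (Finsupp.single i 1) f) ∈ linVanish p := fun j => by
        have := h0 j
        rw [hlin f hf] at this
        simpa [dotProduct] using this
      rw [hp, Submodule.mem_bot] at hmem
      exact hmem
  · intro v
    refine ⟨∑ i, C (v i) * X i, IsHomogeneous.sum _ _ _ fun i _ => isHomogeneous_C_mul_X _ _, ?_⟩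
    funext i
    simp [coeff_C_mul, coeff_X, Finsupp.single_left_inj]

/-- A form of degree `e` lies in the ideal iff it vanishes at all points, because quadrics separate
the points of each family. So, two degrees below the socle, the Hilbert function counts the
points. -/
lemma hilb_pointIdeal_sub_two (hp : Interp 2 p) (hq : Interp 2 q) (h : Interp e (Sum.elim p q)) :
    hilb k r (pointIdeal (e + 2) p q) e = nP + nQ := by
  rw [hilb_eq_finrank (V := (Fin nP ⊕ Fin nQ) → k) _ e
    (LinearMap.pi fun i => (aeval (Sum.elim p q i)).toLinearMap)]
  · simp
  · intro f hf
    have hT : (LinearMap.pi fun i => (aeval (Sum.elim p q i)).toLinearMap) f = 0 ↔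
        (∀ i, eval (p i) f = 0) ∧ ∀ i, eval (q i) f = 0 := by
      rw [funext_iff, Sum.forall]
      simp [aeval_eq_eval]
    rw [hT, mem_pointIdeal_iff p q (d' := 2) rfl hf]
    constructor
    · rintro ⟨h1, h2⟩ g _
      simp [h1, h2]
    · intro hI
      exact ⟨eval_eq_zero_of_orthogonal hp fun g hg => (hI g hg).1,
        eval_eq_zero_of_orthogonal hq fun g hg => (hI g hg).2⟩
  · intro c
    obtain ⟨f, hf, hf'⟩ := h c
    refine ⟨f, hf, funext fun i => ?_⟩
    simpa [aeval_eq_eval] using hf' i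

/-- A form `f` of degree `e` lies in the ideal iff the points weighted by the values of `f` sum to
zero within each family. As these values are arbitrary, one degree below the socle the Hilbert
function adds up the dimensions `r` and `s` of the spans of the two families. -/
lemma hilb_pointIdeal_sub_one {s : ℕ} (hsr : s ≤ r) {q : Fin nQ → Fin s → k}
    (hp : linVanish p = ⊥) (hq : linVanish q = ⊥)
    (h : Interp e (Sum.elim p fun i => extPoint r (q i))) :
    hilb k r (pointIdeal (e + 1) p fun i => extPoint r (q i)) e = r + s := by
  let T1 : MvPolynomial (Fin r) k →ₗ[k] (Fin r → k) :=
    ∑ i, (aeval (p i)).toLinearMap.smulRight (p i)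
  let T2 : MvPolynomial (Fin r) k →ₗ[k] (Fin s → k) :=
    ∑ i, (aeval (extPoint r (q i))).toLinearMap.smulRight (q i)
  have hT1 : ∀ f, T1 f = ∑ i, eval (p i) f • p i := fun f => by simp [T1, aeval_eq_eval]
  have hT2 : ∀ f, T2 f = ∑ i, eval (extPoint r (q i)) f • q i := fun f => by
    simp [T2, aeval_eq_eval]
  rw [hilb_eq_finrank _ e (T1.prod T2)]
  · simp
  · intro f hf
    rw [mem_pointIdeal_iff p _ (d' := 1) rfl hf]
    have hT : T1.prod T2 f = 0 ↔ T1 f = 0 ∧ T2 f = 0 := Prod.mk_eq_zero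
    rw [hT, hT1, hT2]
    constructor
    · rintro ⟨h1, h2⟩ g hg
      rw [← mem_homogeneousSubmodule, homogeneousSubmodule_one_eq_span_X,
        Submodule.mem_span_range_iff_exists_fun] at hg
      obtain ⟨c, rfl⟩ := hg
      have h1' : ∀ j, ∑ i, eval (p i) f * p i j = 0 := fun j => by
        simpa using congrFun h1 j
      have h2' : ∀ j, ∑ i, eval (extPoint r (q i)) f * extPoint r (q i) j = 0 := fun j => by
        by_cases hj : (j : ℕ) < s
        · simpa [extPoint, hj] using congrFun h2 ⟨j, hj⟩
        · simp [extPoint, hj]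
      constructor
      · simp only [map_sum, smul_eval, eval_X, Finset.mul_sum]
        rw [Finset.sum_comm]
        refine Finset.sum_eq_zero fun j _ => ?_
        simp only [mul_left_comm _ (c j), ← Finset.mul_sum, h1', mul_zero]
      · simp only [map_sum, smul_eval, eval_X, Finset.mul_sum]
        rw [Finset.sum_comm]
        refine Finset.sum_eq_zero fun j _ => ?_
        simp only [mul_left_comm _ (c j), ← Finset.mul_sum, h2', mul_zero]
    · intro hI
      constructor
      · funext j
        simpa using (hI (X j) (isHomogeneous_X k j)).1
      · funext j
        simpa [extPoint] using (hI (X (Fin.castLE hsr j)) (isHomogeneous_X k _)).2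
  · rintro ⟨u, v⟩
    obtain ⟨c, rfl⟩ := exists_sum_smul_eq hp u
    obtain ⟨c', rfl⟩ := exists_sum_smul_eq hq v
    obtain ⟨f, hf, hf'⟩ := h (Sum.elim c c')
    have h1 : ∀ i, eval (p i) f = c i := fun i => hf' (Sum.inl i)
    have h2 : ∀ i, eval (extPoint r (q i)) f = c' i := fun i => hf' (Sum.inr i)
    exact ⟨f, hf, by simp [hT1, hT2, h1, h2]⟩

end Level

/-! ### Choice of the points -/

/-- Theorem 3.5 ii), existence: for all `r ≥ 2`, `e ≥ 3`, `r < a ≤ 2r` and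
`a ≤ b ≤ min (C(r+1,2) + C(a-r+1,2)) (C(r+e-3, e-2))`, there is a level algebra of type 2,
codimension `r` and socle degree `e` whose `h`-vector satisfies `h_{e-2} = b`, `h_{e-1} = a`. -/
theorem stmt9 (k : Type) [Field k] [CharZero k] (r e a b : ℕ)
    (hr : 2 ≤ r) (he : 3 ≤ e) (hra : r < a) (ha2r : a ≤ 2 * r) (hab : a ≤ b)
    (hb : b ≤ min ((r + 1).choose 2 + (a - r + 1).choose 2) ((r + e - 3).choose (e - 2))) :
    ∃ I : Ideal (MvPolynomial (Fin r) k),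
      IsLevelQuot k r e 2 I ∧ hilb k r I 1 = r ∧
      hilb k r I (e - 2) = b ∧ hilb k r I (e - 1) = a := by
  obtain ⟨s, rfl⟩ : ∃ s, a = r + s := ⟨a - r, by omega⟩
  obtain ⟨d, rfl⟩ : ∃ d, e = d + 2 := ⟨e - 2, by omega⟩
  rw [le_min_iff, show r + s - r = s by omega, show d + 2 - 2 = d by omega,
    show r + (d + 2) - 3 = r + d - 1 by omega] at hb
  obtain ⟨hb1, hb2⟩ := hb
  -- For `e = 3` the bounds would give `a ≤ b ≤ r < a`.
  have hd : 2 ≤ d := by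
    by_contra hlt
    obtain rfl : d = 1 := by omega
    rw [Nat.choose_one_right] at hb2
    omega
  have hchoose : ∀ n, n ≤ (n + 1).choose 2 := fun n => by
    rw [Nat.choose_succ_succ' n 1, Nat.choose_one_right]
    omega
  have hcr := hchoose r
  have hcs := hchoose s
  -- `b` points in total, at least `r` of them in `k^r` and at least `s` in `k^s`.
  obtain ⟨nP, nQ, hn, hP1, hP2, hQ1, hQ2⟩ : ∃ nP nQ, nP + nQ = b ∧ r ≤ nP ∧
      nP ≤ (r + 1).choose 2 ∧ s ≤ nQ ∧ nQ ≤ (s + 1).choose 2 := by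
    rcases le_total ((r + 1).choose 2) (b - s) with h | h
    · exact ⟨(r + 1).choose 2, b - (r + 1).choose 2, by omega, by omega, by omega, by omega,
        by omega⟩
    · exact ⟨b - s, s, by omega, by omega, by omega, by omega, by omega⟩
  obtain ⟨q, hq2, -, hq1⟩ := exists_general_points (k := k) (m := s) (d := 2)
    (Empty.elim : Empty → Fin s → k) (fun c => ⟨0, isHomogeneous_zero _ _ _, fun i => i.elim⟩)
    nQ hQ2 (by simpa using hQ2)
  have hq2' := hq2.extPoint (r := r) (by omega)
  have hup : ∀ j, ∀ {ι : Type} [Finite ι] {x : ι → Fin r → k}, Interp 2 x →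
      Interp (2 + j) x := by
    intro j
    induction j with
    | zero => exact fun h => h
    | succ j ih => exact fun h => (ih h).succ (by omega)
  obtain ⟨j, rfl⟩ : ∃ j, d = 2 + j := ⟨d - 2, by omega⟩
  obtain ⟨p, hp2, hpd, hp1⟩ := exists_general_points (k := k) (fun i => extPoint r (q i))
    (hup j hq2') nP hP2 (by rw [Fintype.card_fin, hn]; exact hb2)
  have hp0 : linVanish p = ⊥ := Submodule.finrank_eq_zero.1 (by omega)
  have hq0 : linVanish q = ⊥ := Submodule.finrank_eq_zero.1 (by omega)
  have hpd1 := hpd.succ (by omega)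
  refine ⟨pointIdeal (2 + j + 2) p fun i => extPoint r (q i),
    isLevelQuot_pointIdeal (by omega) (by omega) (hpd1.succ (by omega)),
    hilb_one_pointIdeal hpd1.left hp0, ?_, ?_⟩
  · rw [show 2 + j + 2 - 2 = 2 + j by omega, hilb_pointIdeal_sub_two hp2 hq2' hpd, hn]
  · exact hilb_pointIdeal_sub_one (by omega) hp0 hq0 hpd1
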